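/- Let R be a commutative ring and let 0 → A →ι B →π C → 0 be a short exact sequence of R-modules. Assume C is projective and faithful. Then the map q : B̃ → R (sending f ∈ B̃ to the unique scalar r with π ∘ f = r • id_C) is a well-defined surjective R-linear map, and its kernel is exactly the image of the map Hom_R(C,A) → Hom_R(C,B) given by postcomposition with ι. In other words, 0 → Hom_R(C,A) → B̃ →q R → 0 is a short exact sequence of R-modules. (This is the module-theoretic construction underlying the passage from the Atiyah exact sequence (1) to the twisted Atiyah exact sequence (2) of the paper.) -/

import Mathlib

/-- Module-theoretic construction underlying the passage from the Atiyah exact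
sequence to the twisted Atiyah exact sequence: given a short exact sequence
`0 → A → B → C → 0` of `R`-modules with `C` projective and faithful, and
`B̃ = {f : C →ₗ B | π ∘ f ∈ R • id}`, the map `q : B̃ → R` (sending `f` to the
unique `r` with `π ∘ f = r • id`) is a well-defined surjective `R`-linear map
whose kernel is exactly the image of `Hom(C,A) → Hom(C,B)`, `g ↦ ι ∘ g`. -/
theorem twisted_atiyah_exact_sequence
    (R : Type*) [CommRing R]
    (A B C : Type*) [AddCommGroup A] [AddCommGroup B] [AddCommGroup C]
    [Module R A] [Module R B] [Module R C]
    (ι : A →ₗ[R] B) (π : B →ₗ[R] C)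
    (hι : Function.Injective ι) (hπ : Function.Surjective π)
    (hexact : LinearMap.ker π = LinearMap.range ι)
    (hproj : Module.Projective R C)
    (hfaithful : ∀ r : R, r • (LinearMap.id : C →ₗ[R] C) = 0 → r = 0)
    (Bt : Submodule R (C →ₗ[R] B))
    (hBt : ∀ f : C →ₗ[R] B,
      f ∈ Bt ↔ ∃ r : R, π ∘ₗ f = r • (LinearMap.id : C →ₗ[R] C)) :
    ∃ q : Bt →ₗ[R] R,
      (∀ f : Bt, π ∘ₗ (f : C →ₗ[R] B) = q f • (LinearMap.id : C →ₗ[R] C)) ∧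
      Function.Surjective q ∧
      (∀ f : Bt, q f = 0 ↔ ∃ g : C →ₗ[R] A, ι ∘ₗ g = (f : C →ₗ[R] B)) ∧
      (∀ q' : Bt →ₗ[R] R,
        (∀ f : Bt, π ∘ₗ (f : C →ₗ[R] B) = q' f • (LinearMap.id : C →ₗ[R] C)) →
        q' = q) := by
  have uniq : ∀ r s : R, r • (LinearMap.id : C →ₗ[R] C) = s • (LinearMap.id : C →ₗ[R] C) →
      r = s := by
    intro r s h
    exact sub_eq_zero.mp (hfaithful _ (by rw [sub_smul, h, sub_self]))
  have hex : ∀ f : Bt, ∃ r : R, π ∘ₗ (f : C →ₗ[R] B) = r • (LinearMap.id : C →ₗ[R] C) :=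
    fun f => (hBt f).1 f.2
  choose q₀ hq₀ using hex
  refine ⟨{ toFun := q₀, map_add' := ?_, map_smul' := ?_ }, hq₀, ?_, ?_, ?_⟩
  · intro f g
    apply uniq
    rw [← hq₀, add_smul, ← hq₀, ← hq₀, Submodule.coe_add, LinearMap.comp_add]
  · intro r f
    apply uniq
    rw [← hq₀, RingHom.id_apply, smul_assoc, ← hq₀, Submodule.coe_smul, LinearMap.comp_smul]
  · intro r
    obtain ⟨s, hs⟩ := Module.projective_lifting_property π (LinearMap.id : C →ₗ[R] C) hπ
    have hr : π ∘ₗ (r • s) = r • (LinearMap.id : C →ₗ[R] C) := by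
      rw [LinearMap.comp_smul, hs]
    refine ⟨⟨r • s, (hBt _).2 ⟨r, hr⟩⟩, uniq _ _ ?_⟩
    exact (hq₀ ⟨r • s, (hBt _).2 ⟨r, hr⟩⟩).symm.trans hr
  · intro f
    change q₀ f = 0 ↔ _
    constructor
    · intro h
      have h0 : π ∘ₗ (f : C →ₗ[R] B) = 0 := by rw [hq₀, h, zero_smul]
      have hm : ∀ c, (f : C →ₗ[R] B) c ∈ LinearMap.range ι := by
        intro c
        rw [← hexact, LinearMap.mem_ker]
        exact LinearMap.congr_fun h0 c
      refine ⟨(LinearEquiv.ofInjective ι hι).symm.toLinearMap ∘ₗ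
        LinearMap.codRestrict (LinearMap.range ι) (f : C →ₗ[R] B) hm, ?_⟩
      ext c
      exact congrArg Subtype.val ((LinearEquiv.ofInjective ι hι).apply_symm_apply
        (LinearMap.codRestrict (LinearMap.range ι) (f : C →ₗ[R] B) hm c))
    · rintro ⟨g, hg⟩
      apply hfaithful
      rw [← hq₀, ← hg]
      ext c
      have : ι (g c) ∈ LinearMap.ker π := hexact ▸ LinearMap.mem_range_self ι (g c)
      exact this
  · intro q' hq'
    ext f
    exact uniq _ _ ((hq' f).symm.trans (hq₀ f))
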